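/- arXiv:math/0612449 — 2 statements merged into one kernel-verified Lean document; each statement's English description precedes it below -/
import Mathlib

section
/- Let R = MvPolynomial (Fin n) ℂ, let s ⊆ Fin n, and let I ⊆ R be the ideal generated by {X_i : i ∈ s}. For every f ∈ R and every integer k ≥ 0 one has Σ_{l=0}^{k} ((−1)^l / l!) Σ_{(i_1,…,i_l) ∈ s^l} (∂_{i_1} ⋯ ∂_{i_l} f) · X_{i_1} ⋯ X_{i_l} − ε(f) ∈ I^{k+1}; that is, the alternating-sign derivative sum computes, modulo I^{k+1}, the result of setting all variables X_i with i ∈ s equal to zero. -/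
open MvPolynomial

/-- The substitution homomorphism `ε` sending `X i` to `0` for `i ∈ s` and fixing `X i`
for `i ∉ s`. -/
noncomputable def epsHom (n : ℕ) (s : Finset (Fin n)) :
    MvPolynomial (Fin n) ℂ →+* MvPolynomial (Fin n) ℂ :=
  (MvPolynomial.aeval fun i => if i ∈ s then 0 else MvPolynomial.X i).toRingHom

/-- The iterated formal partial derivative `∂_{c 0} ⋯ ∂_{c (l-1)}`. -/
noncomputable def iterPderiv {n : ℕ} {l : ℕ} (c : Fin l → Fin n)
    (f : MvPolynomial (Fin n) ℂ) : MvPolynomial (Fin n) ℂ :=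
  (List.ofFn c).foldr (fun i g => MvPolynomial.pderiv i g) f

/-!
The sum is the Taylor polynomial of `f` at the point `(X i)`, evaluated at the displacement that
moves the coordinates in `s` to `0`. Taylor's formula `f (x + y) ≡ ∑_{l < k} D^l f(x)(y, …, y) / l!`
modulo the `k`-th power of an ideal containing the coordinates of `y` is proved by induction on `f`:
both sides are additive, and if `T_k` denotes the right-hand side then
`T_{k+1} (f * X j) = x j * T_{k+1} f + y j * T_k f`.
-/

open scoped Nat

section Taylor

variable {σ A B : Type*} [CommSemiring A]

/-- The iterated partial derivative `∂_{c 0} ⋯ ∂_{c (l-1)}` over an arbitrary coefficient semiring;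
for complex polynomials in finitely many variables it unfolds to `iterPderiv`. -/
noncomputable def iteratedPderiv {l : ℕ} (c : Fin l → σ) (f : MvPolynomial σ A) :
    MvPolynomial σ A :=
  (List.ofFn c).foldr (fun i g => pderiv i g) f

@[simp]
lemma iteratedPderiv_zero (c : Fin 0 → σ) (f : MvPolynomial σ A) :
    iteratedPderiv c f = f := by
  simp [iteratedPderiv]

lemma iteratedPderiv_succ {l : ℕ} (c : Fin (l + 1) → σ) (f : MvPolynomial σ A) :
    iteratedPderiv c f =
      iteratedPderiv (fun t => c t.castSucc) (pderiv (c (Fin.last l)) f) := by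
  rw [iteratedPderiv, List.ofFn_succ_last, List.foldr_append, List.foldr_cons, List.foldr_nil,
    iteratedPderiv]

variable [CommSemiring B] [Algebra A B] (s : Finset σ) (x y : σ → B)

/-- The `l`-th differential `D^l f(x)(y, …, y)` of `f` at the point `x` along the variables in `s`.
It is the sum over all words of length `l` in `s`, so a mixed derivative is counted once for each
order of differentiation and there is no factor `1 / l!`. -/
noncomputable def iteratedDifferential (l : ℕ) (f : MvPolynomial σ A) : B :=
  ∑ c : Fin l → s, aeval x (iteratedPderiv (fun t => (c t : σ)) f) * ∏ t, y (c t)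

@[simp]
lemma iteratedDifferential_zero (f : MvPolynomial σ A) :
    iteratedDifferential s x y 0 f = aeval x f := by
  simp [iteratedDifferential]

lemma iteratedDifferential_succ (l : ℕ) (f : MvPolynomial σ A) :
    iteratedDifferential s x y (l + 1) f =
      ∑ i ∈ s, y i * iteratedDifferential s x y l (pderiv i f) := by
  rw [← Finset.sum_coe_sort s, iteratedDifferential,
    ← (Fin.snocEquiv fun _ => s).sum_comp, Fintype.sum_prod_type]
  refine Finset.sum_congr rfl fun i _ => ?_
  rw [iteratedDifferential, Finset.mul_sum]
  refine Finset.sum_congr rfl fun c _ => ?_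
  simp only [iteratedPderiv_succ, Fin.snocEquiv_apply, Fin.snoc_castSucc, Fin.snoc_last,
    Fin.prod_univ_castSucc]
  ring

@[simp]
lemma iteratedDifferential_succ_C (l : ℕ) (a : A) :
    iteratedDifferential s x y (l + 1) (C a) = 0 := by
  induction l generalizing a with
  | zero => simp [iteratedDifferential_succ]
  | succ l ih =>
    have ih_zero : iteratedDifferential s x y (l + 1) (0 : MvPolynomial σ A) = 0 := by
      simpa using ih 0
    simp [iteratedDifferential_succ s x y (l + 1), ih_zero]

lemma iteratedDifferential_add (l : ℕ) (f g : MvPolynomial σ A) :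
    iteratedDifferential s x y l (f + g) =
      iteratedDifferential s x y l f + iteratedDifferential s x y l g := by
  induction l generalizing f g with
  | zero => simp
  | succ l ih => simp only [iteratedDifferential_succ, map_add, ih, mul_add, Finset.sum_add_distrib]

variable {s y}

lemma iteratedDifferential_succ_mul_X_eq_sum (hy : ∀ i ∉ s, y i = 0) (l : ℕ)
    (f : MvPolynomial σ A) (j : σ) :
    iteratedDifferential s x y (l + 1) (f * X j) =
      ∑ i ∈ s, y i * iteratedDifferential s x y l (pderiv i f * X j) +
        y j * iteratedDifferential s x y l f := by
  classical
  have leibniz (i : σ) : y i * iteratedDifferential s x y l (pderiv i (f * X j)) =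
      y i * iteratedDifferential s x y l (pderiv i f * X j) +
        if i = j then y j * iteratedDifferential s x y l f else 0 := by
    rcases eq_or_ne i j with rfl | hij
    · simp [iteratedDifferential_add, mul_add, add_comm, mul_comm (X i)]
    · simp [pderiv_X_of_ne hij.symm, hij, mul_comm (X j)]
  simp only [iteratedDifferential_succ, leibniz, Finset.sum_add_distrib, Finset.sum_ite_eq']
  split_ifs with hj
  · rfl
  · simp [hy j hj]

lemma iteratedDifferential_succ_mul_X (hy : ∀ i ∉ s, y i = 0) (l : ℕ) (f : MvPolynomial σ A)
    (j : σ) :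
    iteratedDifferential s x y (l + 1) (f * X j) =
      x j * iteratedDifferential s x y (l + 1) f +
        (l + 1) * (y j * iteratedDifferential s x y l f) := by
  induction l generalizing f with
  | zero =>
    rw [iteratedDifferential_succ_mul_X_eq_sum x hy, iteratedDifferential_succ, Finset.mul_sum]
    simp [mul_comm, mul_left_comm]
  | succ l ih =>
    have sum_eq : ∑ i ∈ s, y i * iteratedDifferential s x y (l + 1) (pderiv i f * X j) =
        x j * iteratedDifferential s x y (l + 2) f +
          (l + 1) * (y j * iteratedDifferential s x y (l + 1) f) := by
      simp only [ih, iteratedDifferential_succ s x y (l + 1) f, iteratedDifferential_succ s x y l f,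
        Finset.mul_sum, ← Finset.sum_add_distrib]
      exact Finset.sum_congr rfl fun i _ => by ring
    rw [iteratedDifferential_succ_mul_X_eq_sum x hy, sum_eq]
    push_cast
    ring

variable [Algebra ℚ B]

variable (s y) in
/-- The Taylor polynomial of `f` at the point `x` along the variables in `s`, evaluated at the
displacement `y`. It consists of the `k` terms of degree `l < k`. -/
noncomputable def taylorSum (k : ℕ) (f : MvPolynomial σ A) : B :=
  ∑ l ∈ Finset.range k, (1 / l ! : ℚ) • iteratedDifferential s x y l f

lemma taylorSum_succ_C (k : ℕ) (a : A) : taylorSum s x y (k + 1) (C a) = algebraMap A B a := by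
  simp [taylorSum, Finset.sum_range_succ']

lemma taylorSum_add (k : ℕ) (f g : MvPolynomial σ A) :
    taylorSum s x y k (f + g) = taylorSum s x y k f + taylorSum s x y k g := by
  simp only [taylorSum, iteratedDifferential_add, smul_add, Finset.sum_add_distrib]

lemma taylorSum_succ_mul_X (hy : ∀ i ∉ s, y i = 0) (k : ℕ) (f : MvPolynomial σ A) (j : σ) :
    taylorSum s x y (k + 1) (f * X j) =
      x j * taylorSum s x y (k + 1) f + y j * taylorSum s x y k f := by
  have term_succ (l : ℕ) : (1 / (l + 1)! : ℚ) • iteratedDifferential s x y (l + 1) (f * X j) =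
      x j * ((1 / (l + 1)! : ℚ) • iteratedDifferential s x y (l + 1) f) +
        y j * ((1 / l ! : ℚ) • iteratedDifferential s x y l f) := by
    have coeff : (1 / (l + 1)! : ℚ) * (l + 1) = 1 / l ! := by
      rw [Nat.factorial_succ]
      push_cast
      field_simp
    have cast_mul (b : B) : ((l : B) + 1) * b = ((l : ℚ) + 1) • b := by
      simp [Algebra.smul_def]
    rw [iteratedDifferential_succ_mul_X x hy, smul_add, cast_mul, smul_smul, coeff,
      mul_smul_comm, mul_smul_comm]
  simp only [taylorSum, Finset.sum_range_succ' _ k, term_succ, Finset.sum_add_distrib,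
    ← Finset.mul_sum, iteratedDifferential_zero, map_mul, aeval_X,
    Nat.factorial_zero, Nat.cast_one, div_one, one_smul]
  ring

end Taylor

theorem taylorSum_sub_aeval_add_mem_pow {σ A B : Type*} [CommSemiring A] [CommRing B]
    [Algebra A B] [Algebra ℚ B] {s : Finset σ} (x : σ → B) {y : σ → B} {I : Ideal B}
    (hy : ∀ i ∉ s, y i = 0) (hI : ∀ i ∈ s, y i ∈ I) (f : MvPolynomial σ A) (k : ℕ) :
    taylorSum s x y k f - aeval (x + y) f ∈ I ^ k := by
  have hyI (j : σ) : y j ∈ I := by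
    by_cases hj : j ∈ s
    · exact hI j hj
    · simp [hy j hj]
  induction f using MvPolynomial.induction_on generalizing k with
  | C a =>
    cases k with
    | zero => simp
    | succ k => simp [taylorSum_succ_C]
  | add f g hf hg =>
    rw [taylorSum_add, map_add, add_sub_add_comm]
    exact add_mem (hf k) (hg k)
  | mul_X f j hf =>
    cases k with
    | zero => simp
    | succ k =>
      have split : taylorSum s x y (k + 1) (f * X j) - aeval (x + y) (f * X j) =
          x j * (taylorSum s x y (k + 1) f - aeval (x + y) f) +
            y j * (taylorSum s x y k f - aeval (x + y) f) := by
        rw [taylorSum_succ_mul_X x hy, map_mul, aeval_X, Pi.add_apply]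
        ring
      rw [split]
      refine add_mem (Ideal.mul_mem_left _ _ (hf (k + 1))) ?_
      rw [pow_succ']
      exact Ideal.mul_mem_mul (hyI j) (hf k)

theorem alternating_derivative_sum_eq_restriction_mod_ideal_pow_general
    {σ A : Type*} [DecidableEq σ] [CommRing A] [Algebra ℚ A] (s : Finset σ)
    (f : MvPolynomial σ A) (k : ℕ) :
    (∑ l ∈ Finset.range (k + 1), ((-1) ^ l / l ! : ℚ) •
        ∑ c : Fin l → s, iteratedPderiv (fun t => (c t : σ)) f * ∏ t, X (c t : σ))
      - aeval (fun i => if i ∈ s then 0 else X i) f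
      ∈ Ideal.span (X '' (s : Set σ)) ^ (k + 1) := by
  let y : σ → MvPolynomial σ A := fun i => if i ∈ s then -X i else 0
  have sum_eq : ∑ l ∈ Finset.range (k + 1), ((-1) ^ l / l ! : ℚ) •
      ∑ c : Fin l → s, iteratedPderiv (fun t => (c t : σ)) f * ∏ t, X (c t : σ) =
      taylorSum s X y (k + 1) f := by
    refine Finset.sum_congr rfl fun l _ => ?_
    have differential_eq : iteratedDifferential s X y l f = (-1 : ℚ) ^ l •
        ∑ c : Fin l → s, iteratedPderiv (fun t => (c t : σ)) f * ∏ t, X (c t : σ) := by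
      simp [iteratedDifferential, y, Finset.prod_neg, Finset.mul_sum, Algebra.smul_def,
        mul_left_comm]
    rw [differential_eq, smul_smul, one_div_mul_eq_div]
  have aeval_eq : (fun i => if i ∈ s then 0 else X i) = X + y := by
    ext1 i
    by_cases hi : i ∈ s <;> simp [y, hi]
  rw [sum_eq, aeval_eq]
  refine taylorSum_sub_aeval_add_mem_pow X (fun i hi => if_neg hi) (fun i hi => ?_) f (k + 1)
  simpa [y, hi] using Ideal.subset_span (Set.mem_image_of_mem X hi)

/-- formula (2.7) of the paper. Let `R = MvPolynomial (Fin n) ℂ`, `s` a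
set of variable indices, and `I` the ideal generated by `{X i : i ∈ s}`. For every `f ∈ R`
and every `k ≥ 0` one has
`Σ_{l=0}^{k} ((−1)^l / l!) Σ_{(i₁,…,i_l) ∈ s^l} (∂_{i₁} ⋯ ∂_{i_l} f) · X_{i₁} ⋯ X_{i_l}
 − ε(f) ∈ I^(k+1)`. -/
theorem alternating_derivative_sum_eq_restriction_mod_ideal_pow
    (n : ℕ) (s : Finset (Fin n)) (f : MvPolynomial (Fin n) ℂ) (k : ℕ) :
    (∑ l ∈ Finset.range (k + 1),
        ((-1 : ℂ) ^ l / (l.factorial : ℂ)) •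
          ∑ c : Fin l → {i // i ∈ s},
            iterPderiv (fun t => (c t : Fin n)) f *
              ∏ t : Fin l, MvPolynomial.X (c t : Fin n))
      - epsHom n s f
      ∈ (Ideal.span (MvPolynomial.X '' (s : Set (Fin n)))) ^ (k + 1) := by
  have h := alternating_derivative_sum_eq_restriction_mod_ideal_pow_general s f k
  simpa [epsHom, iterPderiv, iteratedPderiv, ← Rat.cast_smul_eq_qsmul ℂ] using h
end

section
/- Let R = MvPolynomial (Fin n) ℂ, let s ⊆ Fin n, and let I ⊆ R be the ideal generated by {X_i : i ∈ s}. Let f ∈ R and let l ≥ 0 be an integer. If ∂_i f ∈ I^l for every i ∈ s, then f − ε(f) ∈ I^{l+1}. -/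
open MvPolynomial

/-!
The ideal `I = (X i : i ∈ s)` is monomial, and `p ∈ I ^ l` means that every monomial of `p` has
degree at least `l` in the variables of `s`. The substitution `ε` deletes exactly the monomials
divisible by some `X i` with `i ∈ s`, so every monomial of `f - ε f` is `X i` times a monomial `m`
for some `i ∈ s`. In a torsion-free coefficient ring `m` survives in `∂ᵢ f`, hence has degree at
least `l` in `s`, and multiplying it by `X i` raises this degree by one.
-/

theorem le_degree_filter_iff_exists_le {σ : Type*} {s : Set σ} [DecidablePred (· ∈ s)] {l : ℕ}
    {m : σ →₀ ℕ} :
    l ≤ (m.filter (· ∈ s)).degree ↔ ∃ d ≤ m, d.degree = l ∧ ↑d.support ⊆ s := by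
  constructor
  · intro hl
    obtain ⟨d, hd, hdl⟩ := Finsupp.exists_le_degree_eq _ l hl
    refine ⟨d, hd.trans (Finsupp.le_def.2 fun i => ?_), hdl, fun i hi => ?_⟩
    · rw [Finsupp.filter_apply]
      split_ifs
      exacts [le_rfl, Nat.zero_le _]
    · have hi' : i ∈ (m.filter (· ∈ s)).support := Finsupp.support_mono hd hi
      exact (Finset.mem_filter.1 hi').2
  · rintro ⟨d, hdm, rfl, hds⟩
    refine Finsupp.degree_mono (Finsupp.le_def.2 fun i => ?_)
    rw [Finsupp.filter_apply]
    split_ifs with hi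
    · exact hdm i
    · exact (Finsupp.notMem_support_iff.1 fun hid => hi (hds hid)).le

section CommSemiring

variable {σ R : Type*} [CommSemiring R]

theorem span_X_image_pow (s : Set σ) (l : ℕ) :
    (Ideal.span (X '' s) : Ideal (MvPolynomial σ R)) ^ l =
      Ideal.span ((fun d => monomial d 1) '' {d : σ →₀ ℕ | d.degree = l ∧ ↑d.support ⊆ s}) := by
  simp only [Ideal.span, Submodule.span_pow, Finsupp.image_pow_eq_finsuppProd_image, monomial_eq,
    C_1, one_mul]

theorem mem_span_X_image_pow_iff {s : Set σ} [DecidablePred (· ∈ s)] {l : ℕ}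
    {p : MvPolynomial σ R} :
    p ∈ Ideal.span (X '' s) ^ l ↔ ∀ m ∈ p.support, l ≤ (m.filter (· ∈ s)).degree := by
  rw [span_X_image_pow, mem_ideal_span_monomial_image]
  refine forall₂_congr fun m _ => ?_
  rw [le_degree_filter_iff_exists_le]
  exact exists_congr fun d => and_comm

theorem mem_support_pderiv_iff [IsAddTorsionFree R] {p : MvPolynomial σ R} {i : σ} {m : σ →₀ ℕ} :
    m ∈ (pderiv i p).support ↔ m + Finsupp.single i 1 ∈ p.support := by
  have hcoeff : coeff m (pderiv i p) = (m i + 1) • coeff (m + Finsupp.single i 1) p := by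
    rw [coeff_pderiv, nsmul_eq_mul', Nat.cast_succ]
  rw [mem_support_iff, mem_support_iff, hcoeff, Ne, smul_eq_zero_iff_right (Nat.succ_ne_zero _)]

/-- The substitution sending `X i` to `0` for `i ∈ s` and fixing the other variables, that is,
restriction to the coordinate subspace cut out by `s`. It extends `epsHom` to arbitrary
coefficients and arbitrary sets of variables; the codomain keeps all the variables, so that
`p - killVars s p` makes sense. -/
noncomputable def killVars (s : Set σ) : MvPolynomial σ R →ₐ[R] MvPolynomial σ R :=
  aeval (sᶜ.indicator X)

theorem killVars_monomial_of_forall_eq_zero {s : Set σ} {m : σ →₀ ℕ} (hm : ∀ i ∈ s, m i = 0)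
    (c : R) : killVars s (monomial m c) = monomial m c := by
  rw [killVars, aeval_monomial, algebraMap_eq, monomial_eq]
  congr 1
  refine Finsupp.prod_congr fun i hi => ?_
  have his : i ∈ sᶜ := fun his => Finsupp.mem_support_iff.1 hi (hm i his)
  rw [Set.indicator_of_mem his]

theorem killVars_monomial_of_ne_zero {s : Set σ} {m : σ →₀ ℕ} {i : σ} (his : i ∈ s)
    (hmi : m i ≠ 0) (c : R) : killVars s (monomial m c) = 0 := by
  rw [killVars, aeval_monomial]
  refine mul_eq_zero_of_right _ (Finset.prod_eq_zero (Finsupp.mem_support_iff.2 hmi) ?_)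
  simp only [Set.indicator_of_notMem (Set.notMem_compl_iff.2 his), zero_pow hmi]

open scoped Classical in
theorem coeff_killVars (s : Set σ) (p : MvPolynomial σ R) (m : σ →₀ ℕ) :
    coeff m (killVars s p) = if ∀ i ∈ s, m i = 0 then coeff m p else 0 := by
  induction p using MvPolynomial.induction_on' with
  | monomial d c =>
    by_cases hd : ∀ i ∈ s, d i = 0
    · rw [killVars_monomial_of_forall_eq_zero hd, coeff_monomial]
      grind
    · push Not at hd
      obtain ⟨i, his, hdi⟩ := hd
      rw [killVars_monomial_of_ne_zero his hdi, coeff_zero, coeff_monomial]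
      grind
  | add p q hp hq =>
    rw [map_add, coeff_add, coeff_add, hp, hq, ite_add_ite, add_zero]

end CommSemiring

section CommRing

variable {σ R : Type*} [CommRing R]

theorem mem_support_sub_killVars_iff {s : Set σ} {p : MvPolynomial σ R} {m : σ →₀ ℕ} :
    m ∈ (p - killVars s p).support ↔ m ∈ p.support ∧ ∃ i ∈ s, m i ≠ 0 := by
  classical
  rw [mem_support_iff, coeff_sub, coeff_killVars, mem_support_iff]
  split_ifs with hm
  · simpa using fun _ => hm
  · push Not at hm
    simpa using fun _ => hm

theorem sub_restriction_mem_pow_succ_of_pderiv_mem_pow_general [IsAddTorsionFree R] (s : Set σ)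
    (f : MvPolynomial σ R) (l : ℕ) (hf : ∀ i ∈ s, pderiv i f ∈ Ideal.span (X '' s) ^ l) :
    f - killVars s f ∈ Ideal.span (X '' s) ^ (l + 1) := by
  classical
  refine mem_span_X_image_pow_iff.2 fun m hm => ?_
  obtain ⟨hmf, i, his, hmi⟩ := mem_support_sub_killVars_iff.1 hm
  obtain ⟨d, rfl⟩ : ∃ d, m = d + Finsupp.single i 1 :=
    ⟨_, (Finsupp.sub_add_single_one_cancel hmi).symm⟩
  have hd : l ≤ (d.filter (· ∈ s)).degree :=
    mem_span_X_image_pow_iff.1 (hf i his) d (mem_support_pderiv_iff.2 hmf)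
  rw [Finsupp.filter_add, Finsupp.filter_single_of_pos (· ∈ s) his, map_add,
    Finsupp.degree_single]
  exact Nat.succ_le_succ hd

end CommRing

theorem epsHom_eq_killVars (n : ℕ) (s : Finset (Fin n)) (f : MvPolynomial (Fin n) ℂ) :
    epsHom n s f = killVars (s : Set (Fin n)) f := by
  change aeval _ f = aeval _ f
  congr 2 with i : 1
  by_cases hi : i ∈ s <;> simp [hi]

/-- formula (2.8) of the paper. Let `R = MvPolynomial (Fin n) ℂ`, `s` a
set of variable indices, and `I` the ideal generated by `{X i : i ∈ s}`. Let `f ∈ R` and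
`l ≥ 0`. If `∂ᵢ f ∈ I^l` for every `i ∈ s`, then `f - ε f ∈ I^(l+1)`. -/
theorem sub_restriction_mem_pow_succ_of_pderiv_mem_pow
    (n : ℕ) (s : Finset (Fin n)) (f : MvPolynomial (Fin n) ℂ) (l : ℕ)
    (hf : ∀ i ∈ s, MvPolynomial.pderiv i f
        ∈ (Ideal.span (MvPolynomial.X '' (s : Set (Fin n)))) ^ l) :
    f - epsHom n s f ∈ (Ideal.span (MvPolynomial.X '' (s : Set (Fin n)))) ^ (l + 1) := by
  rw [epsHom_eq_killVars]
  exact sub_restriction_mem_pow_succ_of_pderiv_mem_pow_general (s : Set (Fin n)) f l hf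
end
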